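/- arXiv:1609.07247 — 7 statements merged into one kernel-verified Lean document; each statement's English description precedes it below -/
import Mathlib

section
/- Let G be a finite non-cyclic group. If the cyclicizer Cyc(G) has more than one element, then |G| ≥ 3·|Cyc(G)| (equivalently, the index of Cyc(G) in G is at least 3). -/
/-- The cyclicizer of a group `G`: the set of `y` such that `⟨x, y⟩` is cyclic
for every `x ∈ G`. -/
def cyclicizer (G : Type*) [Group G] : Set G :=
  {y | ∀ x : G, IsCyclic (Subgroup.closure ({x, y} : Set G))}

theorem mem_cyclicizer_iff' {G : Type*} [Group G] (y : G) :
    y ∈ cyclicizer G ↔ ∀ x : G, ∃ u : G, x ∈ Subgroup.zpowers u ∧ y ∈ Subgroup.zpowers u := by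
  constructor
  · intro h x
    obtain ⟨⟨u, hu⟩, hg⟩ := (h x).exists_generator
    have key : ∀ z ∈ Subgroup.closure ({x, y} : Set G), z ∈ Subgroup.zpowers u := by
      intro z hz
      obtain ⟨n, hn⟩ := hg ⟨z, hz⟩
      exact ⟨n, by simpa using congrArg Subtype.val hn⟩
    exact ⟨u, key x (Subgroup.subset_closure (by simp)), key y (Subgroup.subset_closure (by simp))⟩
  · intro h x
    obtain ⟨u, hx, hy⟩ := h x
    have hle : Subgroup.closure ({x, y} : Set G) ≤ Subgroup.zpowers u := by
      rw [Subgroup.closure_le]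
      rintro z (rfl | rfl)
      · exact hx
      · exact hy
    exact isCyclic_of_injective (Subgroup.inclusion hle) (Subgroup.inclusion_injective hle)

/-- The cyclicizer as a subgroup. -/
def cyclicizerSubgroup (G : Type*) [Group G] : Subgroup G where
  carrier := cyclicizer G
  one_mem' := (mem_cyclicizer_iff' _).2 fun x => ⟨x, Subgroup.mem_zpowers x, one_mem _⟩
  mul_mem' := by
    intro a b ha hb
    rw [mem_cyclicizer_iff'] at *
    intro x
    obtain ⟨w, h1, h2⟩ := ha x
    obtain ⟨u, h3, h4⟩ := hb w
    have hle : Subgroup.zpowers w ≤ Subgroup.zpowers u := by simpa using h3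
    exact ⟨u, hle h1, mul_mem (hle h2) h4⟩
  inv_mem' := by
    intro a ha
    rw [mem_cyclicizer_iff'] at *
    intro x
    obtain ⟨w, h1, h2⟩ := ha x
    exact ⟨w, h1, inv_mem h2⟩

theorem exists_zpowers_cyclicizer {G : Type*} [Group G] [Finite G] (x : G) :
    ∃ u : G, x ∈ Subgroup.zpowers u ∧ cyclicizer G ⊆ Subgroup.zpowers u := by
  have key : ∀ S : Set G, S.Finite → S ⊆ cyclicizer G →
      ∃ u : G, x ∈ Subgroup.zpowers u ∧ S ⊆ Subgroup.zpowers u := by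
    intro S hS
    induction S, hS using Set.Finite.induction_on with
    | empty => intro _; exact ⟨x, Subgroup.mem_zpowers x, Set.empty_subset _⟩
    | insert _ _ ih =>
      intro h
      rw [Set.insert_subset_iff] at h
      obtain ⟨w, h1, h2⟩ := ih h.2
      obtain ⟨u, h3, h4⟩ := (mem_cyclicizer_iff' _).1 h.1 w
      have hle : Subgroup.zpowers w ≤ Subgroup.zpowers u := by simpa using h3
      exact ⟨u, hle h1, Set.insert_subset h4 fun z hz => hle (h2 hz)⟩
  exact key _ (Set.toFinite _) subset_rfl

theorem cyclicizer_index_ge_three (G : Type*) [Group G] [Finite G]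
    (hG : ¬ IsCyclic G) (h : 1 < Nat.card (cyclicizer G)) :
    3 * Nat.card (cyclicizer G) ≤ Nat.card G := by
  have hc : Nat.card (cyclicizer G) * (cyclicizerSubgroup G).index = Nat.card G :=
    (cyclicizerSubgroup G).card_mul_index
  rw [← hc, mul_comm]
  refine Nat.mul_le_mul_left _ ?_
  by_contra hlt
  have h0 : (cyclicizerSubgroup G).index ≠ 0 := Subgroup.index_ne_zero_of_finite
  have h12 : (cyclicizerSubgroup G).index = 1 ∨ (cyclicizerSubgroup G).index = 2 := by omega
  apply hG
  rcases h12 with h1 | h2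
  · rw [Subgroup.index_eq_one] at h1
    obtain ⟨u, -, hu⟩ := exists_zpowers_cyclicizer (1 : G)
    refine ⟨u, fun g => hu ?_⟩
    change g ∈ cyclicizerSubgroup G
    rw [h1]; trivial
  · have hne : cyclicizerSubgroup G ≠ ⊤ := by
      intro ht
      rw [ht, Subgroup.index_top] at h2
      omega
    obtain ⟨x, hx⟩ : ∃ x, x ∉ cyclicizerSubgroup G := by
      by_contra! hall
      exact hne (eq_top_iff.2 fun g _ => hall g)
    obtain ⟨u, hxu, hu⟩ := exists_zpowers_cyclicizer x
    refine ⟨u, fun g => ?_⟩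
    by_cases hg : g ∈ cyclicizerSubgroup G
    · exact hu hg
    · have hm : g * x ∈ cyclicizerSubgroup G :=
        (Subgroup.mul_mem_iff_of_index_two h2).2 (by tauto)
      have := mul_mem (hu hm) (inv_mem hxu)
      rwa [mul_inv_cancel_right] at this
end

section
/- Let G be a finite non-cyclic group of order n, and let k = |G \ Cyc(G)| be the number of vertices of the non-cyclic graph Γ_G. Then k < n < 2k. -/
theorem cyclicizer_subset_zpowers_aux (G : Type*) [Group G] [Finite G] (x : G) :
    ∃ a : G, x ∈ Subgroup.zpowers a ∧ cyclicizer G ⊆ (Subgroup.zpowers a : Set G) := by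
  obtain ⟨a, ha, hmax⟩ := Set.exists_max_image {a : G | x ∈ Subgroup.zpowers a} orderOf
    (Set.toFinite _) ⟨x, Subgroup.mem_zpowers x⟩
  refine ⟨a, ha, fun y hy => ?_⟩
  obtain ⟨b, hb⟩ := (Subgroup.isCyclic_iff_exists_zpowers_eq_top _).1 (hy a)
  have hab : a ∈ Subgroup.zpowers b := hb ▸ Subgroup.subset_closure (by simp)
  have hyb : y ∈ Subgroup.zpowers b := hb ▸ Subgroup.subset_closure (by simp)
  have hle : Subgroup.zpowers a ≤ Subgroup.zpowers b := by simpa using hab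
  have h := hmax b (hle ha)
  have heq : Subgroup.zpowers a = Subgroup.zpowers b :=
    Subgroup.eq_of_le_of_card_ge hle (by simpa [Nat.card_zpowers] using h)
  exact heq ▸ hyb

theorem vertex_count_bounds (G : Type*) [Group G] [Finite G]
    (hG : ¬ IsCyclic G) (n k : ℕ) (hn : n = Nat.card G)
    (hk : k = Nat.card {g : G // g ∉ cyclicizer G}) :
    k < n ∧ n < 2 * k := by
  have hnt : ∀ a : G, Subgroup.zpowers a ≠ ⊤ := fun a h =>
    hG ((isCyclic_iff_exists_zpowers_eq_top).2 ⟨a, h⟩)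
  have hk' : k = (cyclicizer G)ᶜ.ncard := hk
  have hsum := Set.ncard_add_ncard_compl (cyclicizer G)
  have h1 : (1 : G) ∈ cyclicizer G := by
    intro x
    have : Subgroup.closure ({x, 1} : Set G) = Subgroup.zpowers x := by
      rw [Set.pair_comm, Subgroup.closure_insert_one, Subgroup.zpowers_eq_closure]
    rw [this]
    infer_instance
  have hpos : 0 < (cyclicizer G).ncard := (Set.ncard_pos).2 ⟨1, h1⟩
  have hx : ∃ x, x ∉ cyclicizer G := by
    by_contra! hall
    obtain ⟨a, -, ha⟩ := cyclicizer_subset_zpowers_aux G 1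
    exact hnt a ((Subgroup.eq_top_iff' _).2 fun y => ha (hall y))
  obtain ⟨x, hx⟩ := hx
  obtain ⟨a, hxa, ha⟩ := cyclicizer_subset_zpowers_aux G x
  have hlt : (cyclicizer G).ncard < (Subgroup.zpowers a : Set G).ncard :=
    Set.ncard_lt_ncard ⟨ha, fun h => hx (h hxa)⟩
  have hc : (Subgroup.zpowers a : Set G).ncard = Nat.card (Subgroup.zpowers a) := rfl
  have hidx := (Subgroup.zpowers a).card_mul_index
  have h2 : 2 ≤ (Subgroup.zpowers a).index := by
    have h0 : (Subgroup.zpowers a).index ≠ 0 := Subgroup.index_ne_zero_of_finite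
    have h1 : (Subgroup.zpowers a).index ≠ 1 := fun h => hnt a (Subgroup.index_eq_one.1 h)
    omega
  have := Nat.mul_le_mul_left (Nat.card (Subgroup.zpowers a)) h2
  omega
end

section
/- Let G be a finite non-cyclic group. Then every vertex of the non-cyclic graph Γ_G has degree at least 2; that is, for every x ∈ G \ Cyc(G) there exist at least two distinct elements y ∈ G \ Cyc(G) with y ≠ x such that the subgroup generated by {x, y} is not cyclic. -/
theorem min_degree_ge_two (G : Type*) [Group G] [Finite G]
    (hG : ¬ IsCyclic G) :
    ∀ x : G, x ∉ cyclicizer G →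
      ∃ y z : G, y ∉ cyclicizer G ∧ z ∉ cyclicizer G ∧ y ≠ x ∧ z ≠ x ∧ y ≠ z ∧
        ¬ IsCyclic (Subgroup.closure ({x, y} : Set G)) ∧
        ¬ IsCyclic (Subgroup.closure ({x, z} : Set G)) := by
  intro x hx
  simp only [cyclicizer, Set.mem_setOf_eq, not_forall] at hx
  obtain ⟨y, hy⟩ := hx
  rw [Set.pair_comm] at hy
  have hz : Subgroup.closure ({x, x * y} : Set G) = Subgroup.closure ({x, y} : Set G) := by
    apply le_antisymm
    · rw [Subgroup.closure_le]
      rintro a (rfl | rfl)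
      · exact Subgroup.subset_closure (by simp)
      · exact mul_mem (Subgroup.subset_closure (by simp)) (Subgroup.subset_closure (by simp))
    · rw [Subgroup.closure_le]
      have h1 : x ∈ Subgroup.closure ({x, x * y} : Set G) := Subgroup.subset_closure (by simp)
      have h2 : x * y ∈ Subgroup.closure ({x, x * y} : Set G) := Subgroup.subset_closure (by simp)
      rintro a (rfl | rfl)
      · exact h1
      · have h3 := mul_mem (inv_mem h1) h2
        rwa [inv_mul_cancel_left] at h3
  have key : ∀ g : G, IsCyclic (Subgroup.closure ({g} : Set G)) := by
    intro g
    rw [← Subgroup.zpowers_eq_closure]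
    infer_instance
  have hz' : ¬ IsCyclic (Subgroup.closure ({x, x * y} : Set G)) := by rwa [hz]
  have hy1 : y ≠ 1 := by
    rintro rfl
    rw [← hz, mul_one, Set.pair_eq_singleton] at hy
    exact hy (key x)
  have hx1 : x ≠ 1 := by
    rintro rfl
    rw [Subgroup.closure_insert_one] at hy
    exact hy (key y)
  refine ⟨y, x * y, fun h => hy (h x), fun h => hz' (h x), ?_, ?_, ?_, hy, hz'⟩
  · rintro rfl
    rw [Set.pair_eq_singleton] at hy
    exact hy (key y)
  · simpa using hy1
  · intro h
    exact hx1 (by simpa using h.symm)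
end

section
/- Let G be a finite non-cyclic group and let x ∈ G \ Cyc(G) have degree exactly 1 in the complement graph Γ̄_G, with unique neighbor y. Then the order of x is 3 or 4, y = x⁻¹, and y also has degree exactly 1 in Γ̄_G. In particular, vertices of degree 1 in Γ̄_G occur only in pairs joined by an edge. -/
theorem cyc_iff {G : Type*} [Group G] (a b : G) :
    IsCyclic (Subgroup.closure ({a, b} : Set G)) ↔
      ∃ c : G, a ∈ Subgroup.zpowers c ∧ b ∈ Subgroup.zpowers c := by
  constructor
  · intro h
    obtain ⟨c, hc⟩ := (Subgroup.isCyclic_iff_exists_zpowers_eq_top _).1 h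
    refine ⟨c, ?_, ?_⟩ <;> rw [hc] <;> apply Subgroup.subset_closure <;> simp
  · rintro ⟨c, ha, hb⟩
    have hle : Subgroup.closure ({a, b} : Set G) ≤ Subgroup.zpowers c := by
      rw [Subgroup.closure_le]
      rintro z (rfl | rfl)
      · exact ha
      · exact hb
    exact isCyclic_of_injective (Subgroup.inclusion hle) (Subgroup.inclusion_injective hle)

theorem mem_cyc_iff {G : Type*} [Group G] (b : G) :
    b ∈ cyclicizer G ↔
      ∀ a : G, ∃ c : G, a ∈ Subgroup.zpowers c ∧ b ∈ Subgroup.zpowers c := by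
  simp only [cyclicizer, Set.mem_ofPred_eq, cyc_iff]

theorem cyc_down {G : Type*} [Group G] {a b : G} (hb : b ∈ cyclicizer G)
    (ha : a ∈ Subgroup.zpowers b) : a ∈ cyclicizer G := by
  rw [mem_cyc_iff] at *
  intro w
  obtain ⟨c, hw, hc⟩ := hb w
  exact ⟨c, hw, (Subgroup.zpowers_le.2 hc) ha⟩

theorem cyc_mul {G : Type*} [Group G] {a b : G} (ha : a ∈ cyclicizer G)
    (hb : b ∈ cyclicizer G) : a * b ∈ cyclicizer G := by
  rw [mem_cyc_iff] at *
  intro w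
  obtain ⟨c, hw, hc⟩ := ha w
  obtain ⟨d, hcd, hbd⟩ := hb c
  have hle := Subgroup.zpowers_le.2 hcd
  exact ⟨d, hle hw, mul_mem (hle hc) hbd⟩

theorem compl_degree_one_pairs (G : Type*) [Group G] [Finite G]
    (hG : ¬ IsCyclic G) (x y : G)
    (hx : x ∉ cyclicizer G) (hy : y ∉ cyclicizer G) (hxy : y ≠ x)
    (hadj : IsCyclic (Subgroup.closure ({x, y} : Set G)))
    (huniq : ∀ z : G, z ∉ cyclicizer G → z ≠ x →
      IsCyclic (Subgroup.closure ({x, z} : Set G)) → z = y) :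
    (orderOf x = 3 ∨ orderOf x = 4) ∧ y = x⁻¹ ∧
      ∀ z : G, z ∉ cyclicizer G → z ≠ y →
        IsCyclic (Subgroup.closure ({y, z} : Set G)) → z = x := by
  simp only [cyc_iff] at hadj huniq ⊢
  have h1 : (1 : G) ∈ cyclicizer G := by
    rw [mem_cyc_iff]
    exact fun a => ⟨a, Subgroup.mem_zpowers a, one_mem _⟩
  have hx1 : x ≠ 1 := fun h => hx (h ▸ h1)
  have hy1 : y ≠ 1 := fun h => hy (h ▸ h1)
  have hxx := Subgroup.mem_zpowers x
  have hinv : ∀ z : G, z ∉ cyclicizer G → z⁻¹ ∉ cyclicizer G := fun z hz h =>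
    hz (cyc_down h (by simpa using inv_mem (Subgroup.mem_zpowers z⁻¹)))
  have hne : x⁻¹ ≠ x := by
    intro hxi
    obtain ⟨c, hc1, hc2⟩ := hadj
    have hc : c ∉ cyclicizer G := fun h => hx (cyc_down h hc1)
    have hx2 : x ^ 2 = 1 := by
      rw [pow_two]; nth_rewrite 1 [← hxi]; simp
    have key : ∀ z ∈ Subgroup.zpowers x, z = 1 ∨ z = x := by
      rintro z ⟨k, rfl⟩
      rcases Int.even_or_odd' k with ⟨m, rfl | rfl⟩
      · left; simp only [zpow_mul]; norm_cast; simp [hx2]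
      · right; simp only [zpow_add, zpow_mul]; norm_cast; simp [hx2]
    by_cases hcx : c = x
    · subst hcx
      rcases key y hc2 with h | h
      · exact hy1 h
      · exact hxy h
    · have hcy : c = y := huniq c hc hcx ⟨c, hc1, Subgroup.mem_zpowers c⟩
      subst hcy
      have hci : c⁻¹ = c := by
        apply huniq _ (hinv _ hc) _ ⟨c, hc1, inv_mem (Subgroup.mem_zpowers c)⟩
        intro h
        apply hcx
        rw [← hxi, ← h, inv_inv]
      have hsqc : c ^ 2 = 1 := by
        rw [pow_two]; nth_rewrite 1 [← hci]; simp
      obtain ⟨k, rfl⟩ := hc1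
      rcases Int.even_or_odd' k with ⟨m, rfl | rfl⟩
      · apply hx1; simp only [zpow_mul]; norm_cast; simp [hsqc]
      · apply hxy; simp only [zpow_add, zpow_mul]; norm_cast; simp [hsqc]
  have hyx : x⁻¹ = y := huniq _ (hinv _ hx) hne ⟨x, hxx, inv_mem hxx⟩
  subst hyx
  have hsq : x ^ 2 ≠ 1 := by
    intro h
    apply hne
    rw [pow_two] at h
    exact (eq_inv_of_mul_eq_one_left h).symm
  refine ⟨?_, rfl, ?_⟩
  · by_cases h2 : x ^ 2 ∈ cyclicizer G
    · right
      have h3 : x ^ 3 ∉ cyclicizer G := by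
        intro h3
        apply hx
        have h2i : (x ^ 2)⁻¹ ∈ cyclicizer G :=
          cyc_down h2 (inv_mem (Subgroup.mem_zpowers _))
        have := cyc_mul h3 h2i
        rwa [show x ^ 3 * (x ^ 2)⁻¹ = x by group] at this
      have h := huniq _ h3 (by
        intro h
        apply hsq
        rw [pow_succ] at h
        simpa using h) ⟨x, hxx, pow_mem hxx 3⟩
      have h4 : x ^ 4 = 1 := by rw [pow_succ, h]; simp
      exact orderOf_eq_prime_pow (p := 2) (n := 1) (by simpa using hsq) (by simpa using h4)
    · left
      have h := huniq _ h2 (by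
        intro h
        apply hx1
        rw [pow_succ] at h
        simpa using h) ⟨x, hxx, pow_mem hxx 2⟩
      have h3 : x ^ 3 = 1 := by rw [pow_succ, h]; simp
      exact orderOf_eq_prime h3 hx1
  · rintro z hz hzy ⟨c, hc1, hc2⟩
    by_contra hzx
    exact hzy (huniq z hz hzx ⟨c, by simpa using hc1, hc2⟩)
end

section
/- Let G be a finite non-cyclic group of order n with |Cyc(G)| = 1. Then the complement graph Γ̄_G is isomorphic to K₃ ∪ (n-4)K₁ — that is, there exist three distinct vertices a, b, c of Γ̄_G that are pairwise adjacent in Γ̄_G, every vertex other than a, b, c is isolated in Γ̄_G, and these are the only edges of Γ̄_G — if and only if n = 8 and G is isomorphic to the dihedral group of order 8. -/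
theorem cyc_pair_iff {G : Type*} [Group G] (x y : G) :
    IsCyclic (Subgroup.closure ({x, y} : Set G)) ↔
      ∃ g : G, x ∈ Subgroup.zpowers g ∧ y ∈ Subgroup.zpowers g := by
  constructor
  · intro h
    obtain ⟨g, hg⟩ := (Subgroup.isCyclic_iff_exists_zpowers_eq_top _).1 h
    refine ⟨g, ?_, ?_⟩ <;> rw [hg] <;> exact Subgroup.subset_closure (by simp)
  · rintro ⟨g, hx, hy⟩
    have hle : Subgroup.closure ({x, y} : Set G) ≤ Subgroup.zpowers g := by
      rw [Subgroup.closure_le]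
      rintro z (rfl | rfl) <;> assumption
    exact isCyclic_of_injective (Subgroup.inclusion hle) (Subgroup.inclusion_injective hle)

theorem d4_pair : ∀ (g : DihedralGroup 4) (i j : Fin 4),
    g ^ (i : ℕ) ≠ 1 → g ^ (i : ℕ) ≠ DihedralGroup.r 1 → g ^ (i : ℕ) ≠ DihedralGroup.r 2 →
    g ^ (i : ℕ) ≠ DihedralGroup.r 3 → g ^ (j : ℕ) ≠ 1 → g ^ (j : ℕ) = g ^ (i : ℕ) := by
  decide

theorem d4_pow4 : ∀ (g : DihedralGroup 4), g ^ 4 = 1 := by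
  decide

theorem d4_zpow (g x : DihedralGroup 4) (h : x ∈ Subgroup.zpowers g) :
    ∃ i : Fin 4, g ^ (i : ℕ) = x := by
  rw [mem_zpowers_iff_mem_range_orderOf] at h
  simp only [Finset.mem_image, Finset.mem_range] at h
  obtain ⟨i, hi, rfl⟩ := h
  have h4 : orderOf g ≤ 4 := Nat.le_of_dvd (by norm_num) (orderOf_dvd_of_pow_eq_one (d4_pow4 g))
  exact ⟨⟨i, by omega⟩, rfl⟩

theorem d8_of {G : Type*} [Group G] (hG : ¬ IsCyclic G) (a : G) (h4 : a ^ 4 = 1)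
    (h2 : a ^ 2 ≠ 1) (hout : ∀ v : G, v ∉ Subgroup.zpowers a → v * v = 1) :
    Nonempty (G ≃* DihedralGroup 4) := by
  have hex : ∃ x, x ∉ Subgroup.zpowers a := by
    by_contra! h
    exact hG ⟨a, h⟩
  obtain ⟨x, hx⟩ := hex
  have hxx := hout x hx
  have ham : a ∈ Subgroup.zpowers a := Subgroup.mem_zpowers a
  have hinv : ∀ y, y ∉ Subgroup.zpowers a → a * y = y * a⁻¹ := by
    intro y hy
    have h1 := hout y hy
    have h3 := hout (y * a) (by rwa [Subgroup.mul_mem_cancel_right _ ham])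
    have : y * (a * y) = y * (y * a⁻¹) := by
      rw [← mul_assoc y y, h1, one_mul, ← mul_assoc]
      apply eq_inv_of_mul_eq_one_left
      rw [← h3]; group
    exact mul_left_cancel this
  have hord : orderOf a = 4 := by
    have := orderOf_eq_prime_pow (p := 2) (n := 1) (x := a) (by simpa using h2) (by simpa using h4)
    simpa using this
  let f : ZMod 4 → G := fun i => a ^ i.val
  have fadd : ∀ i j, f (i + j) = f i * f j := by
    intro i j
    simp only [f]
    rw [← pow_add, ZMod.val_add]
    have := pow_mod_orderOf a (i.val + j.val)
    rwa [hord] at this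
  have f0 : f 0 = 1 := by simp [f]
  have fneg : ∀ i, f (-i) = (f i)⁻¹ := by
    intro i
    apply eq_inv_of_mul_eq_one_left
    rw [← fadd]; simp [f0]
  have fsub : ∀ i j, f (j - i) = (f i)⁻¹ * f j := by
    intro i j
    rw [← fneg, ← fadd]; congr 1; ring
  have hsc : ∀ i, f i * x = x * (f i)⁻¹ := by
    intro i
    have : SemiconjBy x a⁻¹ a := (hinv x hx).symm
    have := this.pow_right i.val
    simp only [f]
    rw [← inv_pow]
    exact this.symm
  have fmem : ∀ i, f i ∈ Subgroup.zpowers a := fun i => Subgroup.npow_mem_zpowers a _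
  have finj : Function.Injective f := by
    intro i j hij
    have := pow_injOn_Iio_orderOf (x := a) (by simpa [hord] using i.val_lt)
      (by simpa [hord] using j.val_lt) hij
    exact ZMod.val_injective 4 this
  have fsurj : ∀ g ∈ Subgroup.zpowers a, ∃ i, f i = g := by
    intro g hg
    classical
    have hfin : IsOfFinOrder a := isOfFinOrder_iff_pow_eq_one.2 ⟨4, by norm_num, h4⟩
    obtain ⟨k, hk⟩ := hfin.mem_zpowers_iff_mem_range_orderOf.1 hg |> Finset.mem_image.1
    refine ⟨(k : ZMod 4), ?_⟩
    have := hk.1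
    simp only [f]
    rw [ZMod.val_natCast, ← hk.2]
    have := pow_mod_orderOf a k
    rwa [hord] at this
  let F : DihedralGroup 4 → G := fun d => match d with
    | .r i => f i
    | .sr i => x * f i
  let φ : DihedralGroup 4 →* G := MonoidHom.mk' F (by
    rintro (i | i) (j | j)
    · exact fadd i j
    · show x * f (j - i) = f i * (x * f j)
      rw [fsub, ← mul_assoc, ← mul_assoc, hsc]
    · show x * f (i + j) = x * f i * f j
      rw [fadd, mul_assoc]
    · show f (j - i) = x * f i * (x * f j)
      rw [fsub, mul_assoc, ← mul_assoc (f i), hsc, mul_assoc, ← mul_assoc x x, hxx, one_mul])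
  refine ⟨(MulEquiv.ofBijective φ ⟨?_, ?_⟩).symm⟩
  · rw [injective_iff_map_eq_one]
    rintro (i | i) h
    · have h : f i = 1 := h
      rw [← f0] at h
      rw [finj h]; rfl
    · have h : x * f i = 1 := h
      exact absurd (by rw [eq_inv_of_mul_eq_one_left h]; exact inv_mem (fmem i)) hx
  · intro g
    by_cases hg : g ∈ Subgroup.zpowers a
    · obtain ⟨i, hi⟩ := fsurj g hg
      exact ⟨.r i, hi⟩
    · have : x * g ∈ Subgroup.zpowers a := by
        by_contra hxg
        have e1 := hinv _ hxg
        have e2 : a * (x * g) = x * g * a := by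
          have hinv' : a⁻¹ * g = g * a := by
            rw [inv_mul_eq_iff_eq_mul, ← mul_assoc, hinv g hg]; group
          rw [← mul_assoc, hinv x hx, mul_assoc, hinv', mul_assoc]
        have e3 : a⁻¹ = a := mul_left_cancel (e1.symm.trans e2)
        apply h2
        rw [pow_two]
        nth_rewrite 1 [← e3]
        simp
      obtain ⟨i, hi⟩ := fsurj _ this
      refine ⟨.sr i, ?_⟩
      show x * f i = g
      rw [hi, ← mul_assoc, hxx, one_mul]

/-- The core of the forward direction, with `a` an element that is not an involution. -/
theorem fwd_core {G : Type*} [Group G] (hG : ¬ IsCyclic G) (a b c : G)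
    (ha2 : a * a ≠ 1) (hb1 : b ≠ 1) (hc1 : c ≠ 1) (hab : a ≠ b) (hac : a ≠ c) (hbc : b ≠ c)
    (cab : a * b = b * a) (cac : a * c = c * a)
    (hout : ∀ v : G, v ≠ a → v ≠ b → v ≠ c → v * v = 1) :
    Nonempty (G ≃* DihedralGroup 4) := by
  have main : ∀ b c : G, b ≠ 1 → c ≠ 1 → a ≠ b → a ≠ c → b ≠ c → a * c = c * a →
      (∀ v : G, v ≠ a → v ≠ b → v ≠ c → v * v = 1) → b = a⁻¹ →
      Nonempty (G ≃* DihedralGroup 4) := by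
    clear hout cab cac hab hac hbc hb1 hc1 b c
    intro b c hb1 hc1 hab hac hbc cac hout hb
    have hcc : c * c = 1 := by
      by_contra hcc
      have h1 : c⁻¹ * c⁻¹ ≠ 1 := by
        rw [← mul_inv_rev]; exact fun h => hcc (inv_eq_one.1 h)
      have h2 : c⁻¹ ≠ a := by rintro rfl; simp at hb; exact hbc hb
      have h3 : c⁻¹ ≠ b := by rw [hb]; intro h; exact hac (inv_injective h).symm
      have h4 : c⁻¹ ≠ c := by
        intro h; apply hcc; nth_rewrite 1 [← h]; simp
      exact h1 (hout _ h2 h3 h4)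
    have hacb : a * c = b := by
      by_contra h
      apply ha2
      have : (a * c) * (a * c) = 1 := hout _ (by simpa using hc1) h (by
        intro h; apply ha2; simp at h; simp [h])
      calc a * a = a * a * (c * c) := by rw [hcc, mul_one]
        _ = a * (a * c) * c := by group
        _ = a * (c * a) * c := by rw [cac]
        _ = (a * c) * (a * c) := by group
        _ = 1 := this
    have hc' : c = a⁻¹ * a⁻¹ := by 
      apply eq_inv_mul_of_mul_eq
      rw [hacb, hb]
    have h4 : a ^ 4 = 1 := by
      have : a ^ 4 = (c * c)⁻¹ := by rw [hc']; group
      rw [this, hcc, inv_one]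
    refine d8_of hG a h4 (by rwa [pow_two]) ?_
    intro v hv
    apply hout v
    · rintro rfl; exact hv (Subgroup.mem_zpowers _)
    · rintro rfl; rw [hb] at hv; exact hv (inv_mem (Subgroup.mem_zpowers _))
    · rintro rfl; rw [hc'] at hv
      exact hv (mul_mem (inv_mem (Subgroup.mem_zpowers _)) (inv_mem (Subgroup.mem_zpowers _)))
  by_cases h1 : b = a⁻¹
  · exact main b c hb1 hc1 hab hac hbc cac hout h1
  by_cases h2 : c = a⁻¹
  · exact main c b hc1 hb1 hac hab hbc.symm cab (fun v x y z => hout v x z y) h2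
  exfalso
  have := hout a⁻¹ (by
    intro h; apply ha2; nth_rewrite 1 [← h]; simp) (Ne.symm h1) (Ne.symm h2)
  rw [← mul_inv_rev] at this
  exact ha2 (inv_eq_one.1 this)

theorem comm_of_cyc {G : Type*} [Group G] {x y : G}
    (h : IsCyclic (Subgroup.closure ({x, y} : Set G))) : x * y = y * x := by
  obtain ⟨g, ⟨i, rfl⟩, ⟨j, rfl⟩⟩ := (cyc_pair_iff x y).1 h
  exact (Commute.refl g).zpow_zpow i j

theorem inv_eq_of_cyc {G : Type*} [Group G] {x y : G} (hx : x * x = 1) (hy : y * y = 1)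
    (hx1 : x ≠ 1) (hy1 : y ≠ 1)
    (h : IsCyclic (Subgroup.closure ({x, y} : Set G))) : x = y := by
  obtain ⟨g, ⟨i, rfl⟩, ⟨j, rfl⟩⟩ := (cyc_pair_iff x y).1 h
  simp only [← zpow_add] at hx hy
  rw [← orderOf_dvd_iff_zpow_eq_one] at hx hy
  rw [Ne, ← orderOf_dvd_iff_zpow_eq_one] at hx1 hy1
  show g ^ i = g ^ j
  rw [← mul_inv_eq_one, ← zpow_neg, ← zpow_add, ← orderOf_dvd_iff_zpow_eq_one]
  obtain ⟨k, hk⟩ := hx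
  obtain ⟨l, hl⟩ := hy
  have odd : ∀ i k : ℤ, i + i = (orderOf g : ℤ) * k → ¬ (orderOf g : ℤ) ∣ i → k % 2 = 1 := by
    intro i k hk hi
    by_contra h
    apply hi
    refine ⟨k / 2, ?_⟩
    have h2 : k = 2 * (k / 2) := by omega
    rw [h2] at hk
    linarith
  have ok := odd i k hk hx1
  have ol := odd j l hl hy1
  refine ⟨(k - l) / 2, ?_⟩
  have h2 : k - l = 2 * ((k - l) / 2) := by omega
  have h3 : 2 * (i + -j) = (orderOf g : ℤ) * (k - l) := by linarith
  rw [h2] at h3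
  linarith

theorem compl_eq_K3_union_isolated_iff_D8 (G : Type*) [Group G] [Finite G]
    (hG : ¬ IsCyclic G) (n : ℕ) (hn : n = Nat.card G)
    (hc : Nat.card (cyclicizer G) = 1) :
    (∃ a b c : G, a ∉ cyclicizer G ∧ b ∉ cyclicizer G ∧ c ∉ cyclicizer G ∧
        a ≠ b ∧ a ≠ c ∧ b ≠ c ∧
        IsCyclic (Subgroup.closure ({a, b} : Set G)) ∧
        IsCyclic (Subgroup.closure ({a, c} : Set G)) ∧
        IsCyclic (Subgroup.closure ({b, c} : Set G)) ∧
        ∀ v : G, v ∉ cyclicizer G → v ≠ a → v ≠ b → v ≠ c →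
          ∀ w : G, w ∉ cyclicizer G → w ≠ v →
            ¬ IsCyclic (Subgroup.closure ({v, w} : Set G))) ↔
      (n = 8 ∧ Nonempty (G ≃* DihedralGroup 4)) := by
  have h1 : (1 : G) ∈ cyclicizer G := by
    intro x
    exact (cyc_pair_iff _ _).2 ⟨x, Subgroup.mem_zpowers x, one_mem _⟩
  have hcyc : ∀ v : G, v ∉ cyclicizer G ↔ v ≠ 1 := by
    intro v
    have hs := (Nat.card_eq_one_iff_unique.1 hc).1
    refine not_congr ⟨fun hv => ?_, fun hv => hv ▸ h1⟩
    exact congrArg Subtype.val (Subsingleton.elim (⟨v, hv⟩ : cyclicizer G) ⟨1, h1⟩)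
  simp only [hcyc]
  constructor
  · rintro ⟨a, b, c, ha1, hb1, hc1, hab, hac, hbc, cab, cac, cbc, hiso⟩
    have hout : ∀ v : G, v ≠ a → v ≠ b → v ≠ c → v * v = 1 := by
      intro v va vb vc
      by_contra hvv
      have hv1 : v ≠ 1 := by rintro rfl; simp at hvv
      refine hiso v hv1 va vb vc v⁻¹ (by simpa using hv1) ?_ ?_
      · intro h; apply hvv; nth_rewrite 1 [← h]; simp
      · exact (cyc_pair_iff _ _).2
          ⟨v, Subgroup.mem_zpowers v, inv_mem (Subgroup.mem_zpowers v)⟩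
    have key : Nonempty (G ≃* DihedralGroup 4) := by
      by_cases ha2 : a * a = 1
      · have hb2 : b * b ≠ 1 := fun hb2 => hab (inv_eq_of_cyc ha2 hb2 ha1 hb1 cab)
        exact fwd_core hG b a c hb2 ha1 hc1 hab.symm hbc hac (comm_of_cyc cab).symm
          (comm_of_cyc cbc) (fun v x y z => hout v y x z)
      · exact fwd_core hG a b c ha2 hb1 hc1 hab hac hbc (comm_of_cyc cab) (comm_of_cyc cac) hout
    refine ⟨?_, key⟩
    obtain ⟨e⟩ := key
    rw [hn, Nat.card_congr e.toEquiv, DihedralGroup.nat_card]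
  · rintro ⟨-, ⟨e⟩⟩
    have tr : ∀ x y : DihedralGroup 4,
        (∃ g, x ∈ Subgroup.zpowers g ∧ y ∈ Subgroup.zpowers g) →
        IsCyclic (Subgroup.closure ({e.symm x, e.symm y} : Set G)) := by
      rintro x y ⟨g, ⟨i, rfl⟩, ⟨j, rfl⟩⟩
      exact (cyc_pair_iff _ _).2 ⟨e.symm g, ⟨i, by simp⟩, ⟨j, by simp⟩⟩
    have hr1 : (DihedralGroup.r 1 : DihedralGroup 4) ∈ Subgroup.zpowers (DihedralGroup.r 1) :=
      Subgroup.mem_zpowers _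
    have hr2 : (DihedralGroup.r 2 : DihedralGroup 4) ∈ Subgroup.zpowers (DihedralGroup.r 1) :=
      ⟨2, by decide⟩
    have hr3 : (DihedralGroup.r 3 : DihedralGroup 4) ∈ Subgroup.zpowers (DihedralGroup.r 1) :=
      ⟨3, by decide⟩
    refine ⟨e.symm (.r 1), e.symm (.r 2), e.symm (.r 3), ?_, ?_, ?_, ?_, ?_, ?_,
      tr _ _ ⟨_, hr1, hr2⟩, tr _ _ ⟨_, hr1, hr3⟩, tr _ _ ⟨_, hr2, hr3⟩, ?_⟩
    · rw [Ne, map_eq_one_iff _ e.symm.injective]; decide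
    · rw [Ne, map_eq_one_iff _ e.symm.injective]; decide
    · rw [Ne, map_eq_one_iff _ e.symm.injective]; decide
    · exact e.symm.injective.ne (by decide)
    · exact e.symm.injective.ne (by decide)
    · exact e.symm.injective.ne (by decide)
    · intro v hv1 va vb vc w hw1 hwv hcy
      obtain ⟨g, ⟨i, hi⟩, ⟨j, hj⟩⟩ := (cyc_pair_iff _ _).1 hcy
      obtain ⟨i', hi'⟩ := d4_zpow (e g) (e v) ⟨i, by simp [← hi]⟩
      obtain ⟨j', hj'⟩ := d4_zpow (e g) (e w) ⟨j, by simp [← hj]⟩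
      have := d4_pair (e g) i' j'
      rw [hi', hj'] at this
      apply hwv
      apply e.injective
      apply this
      · simpa using hv1
      · intro h; exact va (by simp [← h])
      · intro h; exact vb (by simp [← h])
      · intro h; exact vc (by simp [← h])
      · simpa using hw1
end

section
/- Let G be a finite non-cyclic group of order n with |Cyc(G)| = 1. Then the complement graph Γ̄_G is isomorphic to K₄ ∪ (n-5)K₁ — that is, there exist four distinct vertices a, b, c, d of Γ̄_G that are pairwise adjacent in Γ̄_G, every vertex other than a, b, c, d is isolated in Γ̄_G, and these are the only edges of Γ̄_G — if and only if n = 10 and G is isomorphic to the dihedral group of order 10. -/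
/-- powers: additive in `ZMod 5` exponents. -/
lemma aux_pow {G : Type*} [Group G] (x : G) (hx : x ^ 5 = 1) (i j : ZMod 5) :
    x ^ (i + j).val = x ^ i.val * x ^ j.val := by
  rw [← pow_add, ZMod.val_add, ← pow_eq_pow_mod _ hx]

lemma aux_pow_sub {G : Type*} [Group G] (x : G) (hx : x ^ 5 = 1) (i j : ZMod 5) :
    x ^ (i - j).val = (x ^ j.val)⁻¹ * x ^ i.val := by
  rw [eq_inv_mul_iff_mul_eq, ← aux_pow x hx, add_sub_cancel]

lemma aux_iso {G : Type*} [Group G] (x t : G) (hx : x ^ 5 = 1) (hx1 : x ≠ 1)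
    (ht : t * t = 1) (ht' : ∀ i : ℕ, t ≠ x ^ i)
    (hinv : ∀ i : ℕ, t * x ^ i * t = (x ^ i)⁻¹)
    (hs : ∀ g : G, (∃ i : ℕ, g = x ^ i) ∨ ∃ i : ℕ, t * g = x ^ i) :
    Nonempty (G ≃* DihedralGroup 5) := by
  have hti : t⁻¹ = t := inv_eq_of_mul_eq_one_left ht
  have hcomm : ∀ i : ℕ, x ^ i * t = t * (x ^ i)⁻¹ := by
    intro i
    rw [← hinv i, ← mul_assoc, ← mul_assoc, ht, one_mul]
  have hp : Fact (Nat.Prime 5) := ⟨by norm_num⟩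
  have hord : orderOf x = 5 := orderOf_eq_prime hx hx1
  let f : DihedralGroup 5 →* G := MonoidHom.mk' (fun d => match d with
    | .r i => x ^ i.val
    | .sr i => t * x ^ i.val) (by
      rintro (i | i) (j | j)
      · simp only [DihedralGroup.r_mul_r]
        exact aux_pow x hx i j
      · simp only [DihedralGroup.r_mul_sr]
        rw [aux_pow_sub x hx, ← mul_assoc, ← mul_assoc, hcomm]
      · simp only [DihedralGroup.sr_mul_r]
        rw [aux_pow x hx, mul_assoc]
      · simp only [DihedralGroup.sr_mul_sr]
        rw [aux_pow_sub x hx, ← mul_assoc, hinv])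
  have hmod : ∀ i : ℕ, x ^ (i : ZMod 5).val = x ^ i := by
    intro i
    rw [ZMod.val_natCast, ← pow_eq_pow_mod _ hx]
  have hf : Function.Bijective f := by
    constructor
    · rw [injective_iff_map_eq_one]
      rintro (i | i) h
      · change x ^ i.val = 1 at h
        have h1 := orderOf_dvd_of_pow_eq_one h
        rw [hord] at h1
        have h2 : i.val = 0 := Nat.eq_zero_of_dvd_of_lt h1 (ZMod.val_lt i)
        rw [ZMod.val_eq_zero] at h2
        rw [h2]; rfl
      · change t * x ^ i.val = 1 at h
        exfalso
        apply ht' i.val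
        rw [← hti]
        exact inv_eq_of_mul_eq_one_right h
    · intro g
      rcases hs g with ⟨i, hi⟩ | ⟨i, hi⟩
      · exact ⟨.r i, by rw [hi]; exact hmod i⟩
      · refine ⟨.sr i, ?_⟩
        change t * x ^ (i : ZMod 5).val = g
        rw [hmod, ← hi, ← mul_assoc, ht, one_mul]
  exact ⟨(MulEquiv.ofBijective f hf).symm⟩

lemma aux_cyc {G : Type*} [Group G] {x y g : G} (hx : x ∈ Subgroup.zpowers g)
    (hy : y ∈ Subgroup.zpowers g) : IsCyclic (Subgroup.closure ({x, y} : Set G)) := by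
  have h : Subgroup.closure ({x, y} : Set G) ≤ Subgroup.zpowers g := by
    rw [Subgroup.closure_le]
    rintro z (rfl | rfl)
    · exact hx
    · exact hy
  exact isCyclic_of_injective (Subgroup.inclusion h) (Subgroup.inclusion_injective h)

lemma aux_gen {G : Type*} [Group G] {x y : G}
    (h : IsCyclic (Subgroup.closure ({x, y} : Set G))) :
    ∃ g, x ∈ Subgroup.zpowers g ∧ y ∈ Subgroup.zpowers g := by
  obtain ⟨⟨g, hg⟩, hg'⟩ := h.exists_generator
  refine ⟨g, ?_, ?_⟩
  · obtain ⟨k, hk⟩ := hg' ⟨x, Subgroup.subset_closure (by simp)⟩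
    exact ⟨k, by simpa using congrArg Subtype.val hk⟩
  · obtain ⟨k, hk⟩ := hg' ⟨y, Subgroup.subset_closure (by simp)⟩
    exact ⟨k, by simpa using congrArg Subtype.val hk⟩

lemma aux_one {G : Type*} [Group G] (hc : Nat.card (cyclicizer G) = 1) (y : G) :
    y ∉ cyclicizer G ↔ y ≠ 1 := by
  have h1 : (1 : G) ∈ cyclicizer G := fun x =>
    aux_cyc (Subgroup.mem_zpowers x) (one_mem _)
  rw [Nat.card_eq_one_iff_unique] at hc
  obtain ⟨hs, -⟩ := hc
  rw [not_iff_not]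
  constructor
  · intro h
    exact congrArg Subtype.val (Subsingleton.elim (⟨y, h⟩ : cyclicizer G) ⟨1, h1⟩)
  · rintro rfl
    exact h1

lemma aux_dihedral : ∀ (i : ZMod 5) (w : DihedralGroup 5),
    w * .sr i = .sr i * w → w = 1 ∨ w = .sr i := by
  decide

lemma aux_fwd {G : Type*} [Group G] [Finite G] (hG : ¬ IsCyclic G) (a b c d : G)
    (ha : a ≠ 1) (hb : b ≠ 1) (hc : c ≠ 1) (hd : d ≠ 1)
    (hab : a ≠ b) (hac : a ≠ c) (had : a ≠ d) (hbc : b ≠ c) (hbd : b ≠ d) (hcd : c ≠ d)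
    (K : ∀ x ∈ ({a, b, c, d} : Set G), ∀ y ∈ ({a, b, c, d} : Set G), x ≠ y →
      IsCyclic (Subgroup.closure ({x, y} : Set G)))
    (hv : ∀ v : G, v ≠ 1 → v ∉ ({a, b, c, d} : Set G) → ∀ w : G, w ≠ 1 → w ≠ v →
      ¬ IsCyclic (Subgroup.closure ({v, w} : Set G))) :
    Nonempty (G ≃* DihedralGroup 5) := by
  set S : Set G := {a, b, c, d} with hS
  have hS1 : (1 : G) ∉ S := by
    simp only [hS, Set.mem_insert_iff, Set.mem_singleton_iff]
    tauto
  have key : ∀ x ∈ S, ∀ y g : G, x ∈ Subgroup.zpowers g → y ∈ Subgroup.zpowers g → y ≠ 1 →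
      y ∈ S := by
    intro x hx y g hxg hyg hy
    by_contra hyS
    refine hv y hy hyS x (fun h => hS1 (h ▸ hx)) (fun h => hyS (h ▸ hx)) (aux_cyc hyg hxg)
  have keyg : ∀ x ∈ insert 1 S, ∀ y ∈ insert 1 S, ∃ g ∈ insert 1 S,
      x ∈ Subgroup.zpowers g ∧ y ∈ Subgroup.zpowers g := by
    intro x hx y hy
    rcases hx with rfl | hx
    · exact ⟨y, hy, one_mem _, Subgroup.mem_zpowers y⟩
    · rcases hy with rfl | hy
      · exact ⟨x, Or.inr hx, Subgroup.mem_zpowers x, one_mem _⟩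
      · by_cases hxy : x = y
        · exact ⟨x, Or.inr hx, Subgroup.mem_zpowers x, hxy ▸ Subgroup.mem_zpowers x⟩
        · obtain ⟨g, h1, h2⟩ := aux_gen (K x hx y hy hxy)
          refine ⟨g, ?_, h1, h2⟩
          by_cases hg : g = 1
          · exact Or.inl hg
          · exact Or.inr (key x hx g g h1 (Subgroup.mem_zpowers g) hg)
  have keyp : ∀ g ∈ insert 1 S, ∀ y ∈ Subgroup.zpowers g, y ∈ insert 1 S := by
    intro g hg y hy
    rcases hg with rfl | hg
    · left; simpa using hy
    · by_cases h : y = 1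
      · exact Or.inl h
      · exact Or.inr (key g hg y g (Subgroup.mem_zpowers g) hy h)
  let C : Subgroup G :=
    { carrier := insert 1 S
      one_mem' := Or.inl rfl
      mul_mem' := by
        intro x y hx hy
        obtain ⟨g, hg, h1, h2⟩ := keyg x hx y hy
        exact keyp g hg _ (mul_mem h1 h2)
      inv_mem' := by
        intro x hx
        exact keyp x hx _ (inv_mem (Subgroup.mem_zpowers x)) }
  have hcard : Nat.card C = 5 := by
    change Nat.card (insert 1 S : Set G) = 5
    rw [Nat.card_coe_set_eq, Set.ncard_insert_of_notMem hS1, hS,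
      Set.ncard_insert_of_notMem (by simp [hab, hac, had]),
      Set.ncard_insert_of_notMem (by simp [hbc, hbd]), Set.ncard_pair hcd]
  have : Fact (Nat.Prime 5) := ⟨by norm_num⟩
  have hCc : IsCyclic C := isCyclic_of_prime_card hcard
  have hsq : ∀ v : G, v ∉ C → v * v = 1 := by
    intro v hvC
    have hv1 : v ≠ 1 := fun h => hvC (Or.inl h)
    by_contra h
    refine hv v hv1 (fun h => hvC (Or.inr h)) v⁻¹ (inv_ne_one.mpr hv1) ?_
      (aux_cyc (Subgroup.mem_zpowers v) (inv_mem (Subgroup.mem_zpowers v)))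
    intro h'
    apply h
    nth_rewrite 1 [← h']
    exact inv_mul_cancel v
  have haC : a ∈ C := Or.inr (by simp [hS])
  have hpow : ∀ y ∈ C, ∃ i : ℕ, y = a ^ i := by
    intro y hy
    have h := mem_powers_of_prime_card (G := C) (g := ⟨a, haC⟩) (g' := ⟨y, hy⟩) hcard
      (fun h => ha (congrArg Subtype.val h))
    obtain ⟨i, hi⟩ := h
    exact ⟨i, by simpa using (congrArg Subtype.val hi).symm⟩
  have ha5 : a ^ 5 = 1 := by
    have := pow_card_eq_one' (x := (⟨a, haC⟩ : C))
    rw [hcard] at this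
    simpa using congrArg Subtype.val this
  have hinv : ∀ v, v ∉ C → ∀ y ∈ C, v * y * v = y⁻¹ := by
    intro v hv y hy
    have h : v * y ∉ C := fun h => hv ((C.mul_mem_cancel_right hy).1 h)
    have := hsq _ h
    exact eq_inv_of_mul_eq_one_left (by rw [← this]; group)
  obtain ⟨t, ht⟩ : ∃ t, t ∉ C := by
    by_contra! h
    have hT : C = ⊤ := by ext; simp [h]
    rw [hT] at hCc
    exact hG (Subgroup.topEquiv.isCyclic.1 hCc)
  refine aux_iso a t ha5 ha (hsq t ht) (fun i h => ht (h ▸ pow_mem haC i))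
    (fun i => hinv t ht _ (pow_mem haC i)) ?_
  intro g
  by_cases hg : g ∈ C
  · exact Or.inl (hpow g hg)
  · right
    apply hpow
    by_contra htg
    have h1 := hinv (t * g) htg a haC
    have h2 := hinv g hg a haC
    have h3 := hinv t ht _ (inv_mem haC)
    have h4 : t * g = g * t := by
      have e1 := hsq _ htg
      have e2 := hsq _ hg
      have e3 := hsq _ ht
      calc t * g = (t * g) * ((g * t) * (g * t)) := by
            have : (g * t) * (g * t) = 1 := by
              have : (g * t) * (g * t) = t⁻¹ * ((t * g) * (t * g)) * t := by group
              rw [this, e1]; group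
            rw [this, mul_one]
        _ = t * (g * g) * t * g * t := by group
        _ = (t * t) * g * t := by rw [e2]; group
        _ = g * t := by rw [e3]; group
    have h5 : a = a⁻¹ := by
      calc a = t * a⁻¹ * t := by rw [h3, inv_inv]
        _ = t * (g * a * g) * t := by rw [h2]
        _ = (t * g) * a * (g * t) := by group
        _ = a⁻¹ := by rw [← h4, h1]
    have h6 : a ^ 2 = 1 := by
      rw [pow_two]
      nth_rewrite 1 [h5]
      exact inv_mul_cancel a
    apply ha
    calc a = a ^ 5 * ((a ^ 2)⁻¹ * (a ^ 2)⁻¹) := by group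
      _ = 1 := by rw [ha5, h6]; group

theorem compl_eq_K4_union_isolated_iff_D10 (G : Type*) [Group G] [Finite G]
    (hG : ¬ IsCyclic G) (n : ℕ) (hn : n = Nat.card G)
    (hc : Nat.card (cyclicizer G) = 1) :
    (∃ a b c d : G, a ∉ cyclicizer G ∧ b ∉ cyclicizer G ∧ c ∉ cyclicizer G ∧
        d ∉ cyclicizer G ∧
        a ≠ b ∧ a ≠ c ∧ a ≠ d ∧ b ≠ c ∧ b ≠ d ∧ c ≠ d ∧
        IsCyclic (Subgroup.closure ({a, b} : Set G)) ∧
        IsCyclic (Subgroup.closure ({a, c} : Set G)) ∧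
        IsCyclic (Subgroup.closure ({a, d} : Set G)) ∧
        IsCyclic (Subgroup.closure ({b, c} : Set G)) ∧
        IsCyclic (Subgroup.closure ({b, d} : Set G)) ∧
        IsCyclic (Subgroup.closure ({c, d} : Set G)) ∧
        ∀ v : G, v ∉ cyclicizer G → v ≠ a → v ≠ b → v ≠ c → v ≠ d →
          ∀ w : G, w ∉ cyclicizer G → w ≠ v →
            ¬ IsCyclic (Subgroup.closure ({v, w} : Set G))) ↔
      (n = 10 ∧ Nonempty (G ≃* DihedralGroup 5)) := by
  subst hn
  simp only [aux_one hc]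
  constructor
  · rintro ⟨a, b, c, d, ha, hb, hc', hd, hab, hac, had, hbc, hbd, hcd, k1, k2, k3, k4, k5, k6, hv⟩
    have h : Nonempty (G ≃* DihedralGroup 5) := by
      have sw : ∀ x y : G, IsCyclic (Subgroup.closure ({x, y} : Set G)) →
          IsCyclic (Subgroup.closure ({y, x} : Set G)) := by
        intro x y h
        rwa [Set.pair_comm]
      refine aux_fwd hG a b c d ha hb hc' hd hab hac had hbc hbd hcd ?_ ?_
      · rintro x (rfl | rfl | rfl | rfl) y (rfl | rfl | rfl | rfl) hxy <;>
          first
          | exact absurd rfl hxy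
          | assumption
          | (apply sw; assumption)
      · intro v h1 h2
        simp only [Set.mem_insert_iff, Set.mem_singleton_iff, not_or] at h2
        exact hv v h1 h2.1 h2.2.1 h2.2.2.1 h2.2.2.2
    refine ⟨?_, h⟩
    obtain ⟨e⟩ := h
    rw [Nat.card_congr e.toEquiv, DihedralGroup.nat_card]
  · rintro ⟨-, ⟨e⟩⟩
    have hz : ∀ i : ZMod 5, e.symm (.r i) ∈ Subgroup.zpowers (e.symm (.r 1)) := by
      intro i
      refine ⟨(i.val : ℤ), ?_⟩
      simp only [zpow_natCast]
      rw [← map_pow, DihedralGroup.r_one_pow, ZMod.natCast_zmod_val]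
    have h1 : ∀ x : DihedralGroup 5, x ≠ 1 → e.symm x ≠ 1 := by
      intro x hx h
      exact hx (by simpa using h)
    have h2 : ∀ x y : DihedralGroup 5, x ≠ y → e.symm x ≠ e.symm y :=
      fun x y h h' => h (e.symm.injective h')
    refine ⟨e.symm (.r 1), e.symm (.r 2), e.symm (.r 3), e.symm (.r 4),
      h1 _ (by decide), h1 _ (by decide), h1 _ (by decide), h1 _ (by decide),
      h2 _ _ (by decide), h2 _ _ (by decide), h2 _ _ (by decide),
      h2 _ _ (by decide), h2 _ _ (by decide), h2 _ _ (by decide),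
      aux_cyc (hz _) (hz _), aux_cyc (hz _) (hz _), aux_cyc (hz _) (hz _),
      aux_cyc (hz _) (hz _), aux_cyc (hz _) (hz _), aux_cyc (hz _) (hz _), ?_⟩
    intro v hv va vb vc vd w hw hwv hcyc
    obtain ⟨g, ⟨m, rfl⟩, ⟨k, rfl⟩⟩ := aux_gen hcyc
    have hcom : e (g ^ k) * e (g ^ m) = e (g ^ m) * e (g ^ k) := by
      rw [← map_mul, ← map_mul, ← zpow_add, ← zpow_add, add_comm]
    simp only at hv va vb vc vd hw hwv
    generalize g ^ m = v at *
    generalize g ^ k = w at *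
    obtain ⟨v, rfl⟩ := e.symm.surjective v
    obtain ⟨w, rfl⟩ := e.symm.surjective w
    simp only [MulEquiv.apply_symm_apply] at hcom
    rcases v with i | i
    · have : ∀ i : ZMod 5, i = 0 ∨ i = 1 ∨ i = 2 ∨ i = 3 ∨ i = 4 := by decide
      rcases this i with rfl | rfl | rfl | rfl | rfl
      · exact hv (map_one e.symm)
      · exact va rfl
      · exact vb rfl
      · exact vc rfl
      · exact vd rfl
    · rcases aux_dihedral i w hcom with rfl | rfl
      · exact hw (map_one e.symm)
      · exact hwv rfl
end

section
/- Let G be a finite non-cyclic group that is acceptable, i.e., every element of G has order 1, 2 or 3, and G contains at least one element of order 2 and at least one element of order 3. Then Cyc(G) = {e}, and the complement graph Γ̄_G is a disjoint union of copies of P₂ together with isolated vertices; that is, every vertex of Γ̄_G has degree at most 1 (each element of order 3 is adjacent in Γ̄_G only to its inverse, and each element of order 2 is isolated in Γ̄_G). -/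
theorem acc_mem_cases {G : Type*} [Group G] [Finite G]
    (hord : ∀ g : G, orderOf g = 1 ∨ orderOf g = 2 ∨ orderOf g = 3) (g x : G)
    (hx : x ∈ Subgroup.zpowers g) : x = 1 ∨ x = g ∨ x = g⁻¹ := by
  classical
  rw [← mem_powers_iff_mem_zpowers, mem_powers_iff_mem_range_orderOf] at hx
  simp only [Finset.mem_image, Finset.mem_range] at hx
  obtain ⟨k, hk, rfl⟩ := hx
  have h3 : k < 3 := by rcases hord g with h | h | h <;> omega
  interval_cases k
  · simp
  · simp
  · right; right
    have h : orderOf g = 3 := by rcases hord g with h | h | h <;> omega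
    rw [eq_inv_iff_mul_eq_one, ← pow_succ]
    have h' := pow_orderOf_eq_one g
    rwa [h] at h'

theorem acc_key {G : Type*} [Group G] [Finite G]
    (hord : ∀ g : G, orderOf g = 1 ∨ orderOf g = 2 ∨ orderOf g = 3) (x y : G)
    (h : IsCyclic (Subgroup.closure ({x, y} : Set G))) :
    x = 1 ∨ y = 1 ∨ y = x ∨ y = x⁻¹ := by
  obtain ⟨g, hg⟩ := (Subgroup.isCyclic_iff_exists_zpowers_eq_top _).1 h
  have hx : x ∈ Subgroup.zpowers g := hg ▸ Subgroup.subset_closure (by simp)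
  have hy : y ∈ Subgroup.zpowers g := hg ▸ Subgroup.subset_closure (by simp)
  rcases acc_mem_cases hord g x hx with h1 | h1 | h1 <;>
  rcases acc_mem_cases hord g y hy with h2 | h2 | h2 <;> simp [h1, h2]

theorem acc_cyc {G : Type*} [Group G] (x y : G) (hy : y ∈ Subgroup.zpowers x) :
    IsCyclic (Subgroup.closure ({x, y} : Set G)) := by
  refine (Subgroup.isCyclic_iff_exists_zpowers_eq_top _).2 ⟨x, le_antisymm ?_ ?_⟩
  · rw [Subgroup.zpowers_le]
    exact Subgroup.subset_closure (by simp)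
  · rw [Subgroup.closure_le]
    rintro z (rfl | rfl)
    · exact Subgroup.mem_zpowers _
    · exact hy

theorem acceptable_group_compl_structure (G : Type*) [Group G] [Finite G]
    (hG : ¬ IsCyclic G)
    (hord : ∀ g : G, orderOf g = 1 ∨ orderOf g = 2 ∨ orderOf g = 3)
    (h2 : ∃ g : G, orderOf g = 2) (h3 : ∃ g : G, orderOf g = 3) :
    cyclicizer G = {1} ∧
    (∀ x : G, orderOf x = 3 → ∀ y : G, y ∉ cyclicizer G → y ≠ x →
      (IsCyclic (Subgroup.closure ({x, y} : Set G)) ↔ y = x⁻¹)) ∧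
    (∀ x : G, orderOf x = 2 → ∀ y : G, y ∉ cyclicizer G → y ≠ x →
      ¬ IsCyclic (Subgroup.closure ({x, y} : Set G))) := by
  have h1 : (1 : G) ∈ cyclicizer G := fun x => acc_cyc x 1 (one_mem _)
  refine ⟨?_, ?_, ?_⟩
  · ext y
    refine ⟨fun hy => ?_, fun hy => by rw [Set.mem_singleton_iff.1 hy]; exact h1⟩
    obtain ⟨a, ha⟩ := h2
    obtain ⟨b, hb⟩ := h3
    by_contra hne
    have hne : y ≠ 1 := hne
    have ya : orderOf y = 2 := by
      rcases acc_key hord a y (hy a) with rfl | h | rfl | rfl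
      · simp at ha
      · exact absurd h hne
      · exact ha
      · rwa [orderOf_inv]
    have yb : orderOf y = 3 := by
      rcases acc_key hord b y (hy b) with rfl | h | rfl | rfl
      · simp at hb
      · exact absurd h hne
      · exact hb
      · rwa [orderOf_inv]
    omega
  · intro x hx y hy hyx
    constructor
    · intro h
      rcases acc_key hord x y h with rfl | rfl | h | h
      · simp at hx
      · exact absurd h1 hy
      · exact absurd h hyx
      · exact h
    · rintro rfl
      exact acc_cyc _ _ (inv_mem (Subgroup.mem_zpowers x))
  · intro x hx y hy hyx h
    have hxx : x⁻¹ = x := by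
      rw [inv_eq_iff_mul_eq_one, ← pow_two, ← hx, pow_orderOf_eq_one]
    rcases acc_key hord x y h with rfl | rfl | h | h
    · simp at hx
    · exact hy h1
    · exact hyx h
    · exact hyx (h.trans hxx)
end
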